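/- arXiv:2110.11651 — 3 statements merged into one kernel-verified Lean document; each statement's English description precedes it below -/
import Mathlib

section
/- In the local public good game under Assumption 1 (normality), let (x*, y*, g*) be a Nash equilibrium and suppose two players i, j ∈ N satisfy x*_i > k and x*_j > k. Then i and j are linked in equilibrium: ḡ*_{ij} = 1, i.e. g*_{ij} = 1 or g*_{ji} = 1. -/
open Finset Function

noncomputable section

/-- A directed network on `n` players: `g i j = true` iff `i` sponsors a link to `j`. -/
abbrev Net (n : ℕ) := Fin n → Fin n → Bool

/-- The number of links sponsored by player `i`. -/
def deg {n : ℕ} (g : Net n) (i : Fin n) : ℕ :=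
  (Finset.univ.filter fun j => g i j = true).card

/-- Spillovers received by player `i`: the provision of the players she links to. -/
def spill {n : ℕ} (x : Fin n → ℝ) (g : Net n) (i : Fin n) : ℝ :=
  ∑ j, if g i j = true then x j else 0

/-- Public good consumption of player `i`: own provision plus spillovers. -/
def cons {n : ℕ} (x : Fin n → ℝ) (g : Net n) (i : Fin n) : ℝ :=
  x i + spill x g i

/-- The primitives of the local public good game: prices of the private good, wealths,
linking cost, utilities and induced Engel curves. -/
structure Game (n : ℕ) where
  p : Fin n → ℝ
  w : Fin n → ℝ
  k : ℝ
  U : Fin n → ℝ → ℝ → ℝ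
  γ : Fin n → ℝ → ℝ
  p_pos : ∀ i, 0 < p i
  w_pos : ∀ i, 0 < w i
  k_nonneg : 0 ≤ k
  U_smooth : ∀ i, ContDiff ℝ 2 fun q : ℝ × ℝ => U i q.1 q.2
  U_sconcave : ∀ i, StrictConcaveOn ℝ Set.univ fun q : ℝ × ℝ => U i q.1 q.2
  U_mono_x : ∀ i b, StrictMono fun a => U i a b
  U_mono_y : ∀ i a, StrictMono fun b => U i a b

/-- Net social income of player `i`. -/
def netInc {n : ℕ} (G : Game n) (x : Fin n → ℝ) (g : Net n) (i : Fin n) : ℝ :=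
  G.w i - (deg g i : ℝ) * G.k + spill x g i

/-- Assumption 1 (normality): each Engel curve is continuously differentiable with
derivative in `[0,1]`. -/
def NormalGame {n : ℕ} (G : Game n) : Prop :=
  ∀ i, ContDiff ℝ 1 (G.γ i) ∧ ∀ t : ℝ, deriv (G.γ i) t ∈ Set.Icc (0 : ℝ) 1

/-- `G.γ i` is the demand (Engel curve) induced by `U i`: on the budget line with
income `m`, and under the constraint that public good consumption is at least the
spillovers `s`, the optimal public good consumption is `max (γ i m) s`. -/
def EngelCompatible {n : ℕ} (G : Game n) : Prop :=
  ∀ (i : Fin n) (m s xb yb : ℝ), 0 ≤ s → s ≤ xb → 0 ≤ yb → xb + G.p i * yb = m →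
    (∀ xb' yb' : ℝ, s ≤ xb' → 0 ≤ yb' → xb' + G.p i * yb' = m →
      G.U i xb' yb' ≤ G.U i xb yb) →
    xb = max (G.γ i m) s

/-- Budget feasibility of player `i`'s strategy. -/
def Feasible {n : ℕ} (G : Game n) (x y : Fin n → ℝ) (g : Net n) (i : Fin n) : Prop :=
  0 ≤ x i ∧ 0 ≤ y i ∧ g i i = false ∧
    x i + G.p i * y i + (deg g i : ℝ) * G.k = G.w i

/-- Player `i`'s payoff. -/
def payoff {n : ℕ} (G : Game n) (x y : Fin n → ℝ) (g : Net n) (i : Fin n) : ℝ :=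
  G.U i (cons x g i) (y i)

/-- Replace row `i` of the network `g` by `r` (a unilateral linking deviation). -/
def updRow {n : ℕ} (g : Net n) (i : Fin n) (r : Fin n → Bool) : Net n :=
  fun a b => if a = i then r b else g a b

/-- Nash equilibrium: every player's strategy is feasible and no feasible unilateral
deviation (in provision, private consumption and links) improves her payoff. -/
def Nash {n : ℕ} (G : Game n) (x y : Fin n → ℝ) (g : Net n) : Prop :=
  (∀ i, Feasible G x y g i) ∧
  ∀ (i : Fin n) (xi yi : ℝ) (r : Fin n → Bool),
    Feasible G (Function.update x i xi) (Function.update y i yi) (updRow g i r) i →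
    payoff G (Function.update x i xi) (Function.update y i yi) (updRow g i r) i ≤
      payoff G x y g i

/-- Sociable Nash equilibrium: a Nash equilibrium in which any payoff-equivalent
deviation only uses links already established in equilibrium (players indifferent
about a link establish it). -/
def Sociable {n : ℕ} (G : Game n) (x y : Fin n → ℝ) (g : Net n) : Prop :=
  Nash G x y g ∧
  ∀ (i : Fin n) (xi yi : ℝ) (r : Fin n → Bool),
    Feasible G (Function.update x i xi) (Function.update y i yi) (updRow g i r) i →
    payoff G (Function.update x i xi) (Function.update y i yi) (updRow g i r) i =
      payoff G x y g i →
    ∀ j, r j = true → g i j = true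

/-- Strict Nash equilibrium: any feasible unilateral deviation that differs from the
equilibrium strategy strictly reduces the deviator's payoff. -/
def StrictNash {n : ℕ} (G : Game n) (x y : Fin n → ℝ) (g : Net n) : Prop :=
  (∀ i, Feasible G x y g i) ∧
  ∀ (i : Fin n) (xi yi : ℝ) (r : Fin n → Bool),
    Feasible G (Function.update x i xi) (Function.update y i yi) (updRow g i r) i →
    (xi ≠ x i ∨ yi ≠ y i ∨ r ≠ g i) →
    payoff G (Function.update x i xi) (Function.update y i yi) (updRow g i r) i <
      payoff G x y g i

/-- `(xi, yi)` is an optimal bundle for player `i` in isolation (no links). -/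
def IsoOpt {n : ℕ} (G : Game n) (i : Fin n) (xi yi : ℝ) : Prop :=
  0 ≤ xi ∧ 0 ≤ yi ∧ xi + G.p i * yi = G.w i ∧
    ∀ xi' yi' : ℝ, 0 ≤ xi' → 0 ≤ yi' → xi' + G.p i * yi' = G.w i →
      G.U i xi' yi' ≤ G.U i xi yi

/-- `g` is a core-periphery graph with core `C`: core players are mutually linked
(with reciprocated links), periphery players have no links among themselves, and
every non-isolated periphery player links to some core player. -/
def IsCorePeriphery {n : ℕ} (g : Net n) (C : Finset (Fin n)) : Prop :=
  (∀ i ∈ C, ∀ j ∈ C, i ≠ j → g i j = true ∧ g j i = true) ∧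
  (∀ i ∉ C, ∀ j ∉ C, g i j = false) ∧
  (∀ i ∉ C, (∃ j, g i j = true ∨ g j i = true) → ∃ l ∈ C, g i l = true)

/-- `g` is a nested split graph with core `C`: a core-periphery graph in which the
neighborhoods of periphery players are nested. -/
def IsNestedSplit {n : ℕ} (g : Net n) (C : Finset (Fin n)) : Prop :=
  IsCorePeriphery g C ∧
  ∀ i ∉ C, ∀ j ∉ C, deg g j ≤ deg g i → ∀ l, g j l = true → g i l = true

/-- The core of an equilibrium: the players contributing strictly more than the
linking cost. -/
def coreOf {n : ℕ} (G : Game n) (x : Fin n → ℝ) : Finset (Fin n) :=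
  Finset.univ.filter fun i => G.k < x i

/-- Adjacency in the closure of `g`. -/
def adjBar {n : ℕ} (g : Net n) (i j : Fin n) : Prop :=
  g i j = true ∨ g j i = true

/-- All players' consumption choices are optimal given the (fixed) network. -/
def ConsOpt {n : ℕ} (G : Game n) (x y : Fin n → ℝ) (g : Net n) : Prop :=
  ∀ i, Feasible G x y g i ∧
    ∀ xi yi : ℝ,
      Feasible G (Function.update x i xi) (Function.update y i yi) g i →
      payoff G (Function.update x i xi) (Function.update y i yi) g i ≤ payoff G x y g i

/-- Assumption 2: identical preferences and identical price of the private good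
(hence identical Engel curves). -/
def Homogeneous {n : ℕ} (G : Game n) : Prop :=
  ∀ i j, G.U i = G.U j ∧ G.p i = G.p j ∧ G.γ i = G.γ j

/-- Social welfare: the sum of individual payoffs. -/
def welfare {n : ℕ} (G : Game n) (x y : Fin n → ℝ) (g : Net n) : ℝ :=
  ∑ i, G.U i (cons x g i) (y i)

/-- Aggregate feasibility for the social planner: total provision, total private
consumption and total linking costs are financed by total wealth. -/
def FeasAgg {n : ℕ} (G : Game n) (x y : Fin n → ℝ) (g : Net n) : Prop :=
  (∀ i, 0 ≤ x i) ∧ (∀ i, 0 ≤ y i) ∧ (∀ i, g i i = false) ∧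
    ∑ i, x i + ∑ i, G.p i * y i + (∑ i, (deg g i : ℝ)) * G.k ≤ ∑ i, G.w i

/-- Efficient (welfare-maximizing) configuration. -/
def Efficient {n : ℕ} (G : Game n) (x y : Fin n → ℝ) (g : Net n) : Prop :=
  FeasAgg G x y g ∧
  ∀ (x' y' : Fin n → ℝ) (g' : Net n), FeasAgg G x' y' g' →
    welfare G x' y' g' ≤ welfare G x y g

/-- The same game with a different linking cost. -/
def Game.withCost {n : ℕ} (G : Game n) (k' : ℝ) (h : 0 ≤ k') : Game n :=
  { G with k := k', k_nonneg := h }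

/-- The same game with a different wealth distribution. -/
def Game.withWealth {n : ℕ} (G : Game n) (w' : Fin n → ℝ) (h : ∀ i, 0 < w' i) : Game n :=
  { G with w := w', w_pos := h }

/-- Budget feasibility with personalized public good prices `ρ` and lump-sum taxes `τ`. -/
def FeasibleT {n : ℕ} (G : Game n) (ρ τ : Fin n → ℝ) (x y : Fin n → ℝ) (g : Net n)
    (i : Fin n) : Prop :=
  0 ≤ x i ∧ 0 ≤ y i ∧ g i i = false ∧
    ρ i * x i + G.p i * y i + (deg g i : ℝ) * G.k = G.w i - τ i

/-- Nash equilibrium under personalized public good prices `ρ` and lump-sum taxes `τ`. -/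
def NashT {n : ℕ} (G : Game n) (ρ τ : Fin n → ℝ) (x y : Fin n → ℝ) (g : Net n) : Prop :=
  (∀ i, FeasibleT G ρ τ x y g i) ∧
  ∀ (i : Fin n) (xi yi : ℝ) (r : Fin n → Bool),
    FeasibleT G ρ τ (Function.update x i xi) (Function.update y i yi) (updRow g i r) i →
    payoff G (Function.update x i xi) (Function.update y i yi) (updRow g i r) i ≤
      payoff G x y g i

/-- Sponsoring one additional link raises the number of sponsored links by one. -/
lemma deg_updRow_update {n : ℕ} (g : Net n) (i j : Fin n) (h : g i j = false) :
    deg (updRow g i (Function.update (g i) j true)) i = deg g i + 1 := by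
  have hset : (Finset.univ.filter fun l =>
      updRow g i (Function.update (g i) j true) i l = true) =
      insert j (Finset.univ.filter fun l => g i l = true) := by
    ext l
    by_cases hl : l = j <;> simp [updRow, Function.update_apply, hl]
  unfold deg
  rw [hset, Finset.card_insert_of_notMem (by simp [h])]

/-- Sponsoring an additional link to `j` raises spillovers by the provision of `j`,
whatever the sponsor's own provision. -/
lemma spill_updRow_update {n : ℕ} (x : Fin n → ℝ) (g : Net n) (i j : Fin n) (c : ℝ)
    (hij : i ≠ j) (hii : g i i = false) (h : g i j = false) :
    spill (Function.update x i c) (updRow g i (Function.update (g i) j true)) i =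
      spill x g i + x j := by
  have hterm : ∀ l, (if updRow g i (Function.update (g i) j true) i l = true
      then Function.update x i c l else 0) =
      (if g i l = true then x l else 0) + if l = j then x j else 0 := by
    intro l
    by_cases hl : l = j
    · subst hl
      simp [updRow, h, hij.symm]
    · by_cases hli : l = i
      · subst hli
        simp [updRow, hii, hij]
      · simp [updRow, hl, hli]
  unfold spill
  simp_rw [hterm, Finset.sum_add_distrib]
  simp

/-- In a Nash equilibrium under Assumption 1, any two players whose
contributions strictly exceed the linking cost are linked in the closure. -/
theorem large_contributors_linked {n : ℕ} (G : Game n) (hk : 0 < G.k)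
    (hN : NormalGame G) (hEC : EngelCompatible G)
    (x y : Fin n → ℝ) (g : Net n) (hNE : Nash G x y g)
    (i j : Fin n) (hij : i ≠ j) (hi : G.k < x i) (hj : G.k < x j) :
    g i j = true ∨ g j i = true := by
  left
  by_contra hg
  have hg : g i j = false := by simpa using hg
  obtain ⟨hx, hy, hii, hb⟩ := hNE.1 i
  have hdev := hNE.2 i (x i - G.k) (y i) (Function.update (g i) j true) (by
    refine ⟨by simp [hi.le], by simpa using hy, by simp [updRow, hij, hii], ?_⟩
    rw [deg_updRow_update g i j hg]
    simp only [Function.update_self]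
    push_cast
    linarith)
  have hlt := G.U_mono_x i (y i)
    (show cons x g i < x i - G.k + (spill x g i + x j) by unfold _root_.cons; linarith)
  simp only [payoff] at hdev
  rw [_root_.cons, spill_updRow_update x g i j _ hij hii hg] at hdev
  simp only [Function.update_self] at hdev
  exact absurd hlt hdev.not_gt
end
end

section
/- In the local public good game under Assumption 1 (normality), if k ≤ k̄ = max_{i∈N} x_i^I, then the network of any strict Nash equilibrium is a nested split graph: it is a core-periphery graph in which the neighborhoods of periphery players are nested, i.e. for any periphery players i, j, if η_j(g) ≤ η_i(g) then N_j(g) ⊆ N_i(g). -/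
open Finset Function

noncomputable section

/-- The set of players to whom player `i` sponsors a link. -/
def outNbrs {n : ℕ} (g : Net n) (i : Fin n) : Finset (Fin n) :=
  Finset.univ.filter fun j => g i j = true

lemma mem_outNbrs {n : ℕ} {g : Net n} {i j : Fin n} : j ∈ outNbrs g i ↔ g i j = true := by
  simp [outNbrs]

lemma mem_coreOf {n : ℕ} {G : Game n} {x : Fin n → ℝ} {i : Fin n} :
    i ∈ coreOf G x ↔ G.k < x i := by
  simp [coreOf]

lemma spill_eq_sum_outNbrs {n : ℕ} (x : Fin n → ℝ) (g : Net n) (i : Fin n) :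
    spill x g i = ∑ j ∈ outNbrs g i, x j := by
  simp [spill, outNbrs, Finset.sum_filter]

namespace StrictNash

variable {n : ℕ} {G : Game n} {x y : Fin n → ℝ} {g : Net n}

lemma not_mem_outNbrs_self (hS : StrictNash G x y g) (i : Fin n) : i ∉ outNbrs g i := by
  simp [mem_outNbrs, (hS.1 i).2.2.1]

lemma budget (hS : StrictNash G x y g) (i : Fin n) :
    x i + G.p i * y i + ((outNbrs g i).card : ℝ) * G.k = G.w i :=
  (hS.1 i).2.2.2

/-- A feasible deviation to a different set of links cannot weakly raise both public and
private good consumption. -/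
lemma cons_lt_of_links_ne (hS : StrictNash G x y g) {i : Fin n} {S : Finset (Fin n)}
    {a b : ℝ} (ha : 0 ≤ a) (hb : y i ≤ b) (hi : i ∉ S) (hne : S ≠ outNbrs g i)
    (hbud : a + G.p i * b + (S.card : ℝ) * G.k = G.w i) :
    a + ∑ j ∈ S, x j < x i + ∑ j ∈ outNbrs g i, x j := by
  have hrow : outNbrs (updRow g i fun j => decide (j ∈ S)) i = S := by
    ext j; simp [mem_outNbrs, updRow]
  have hsum : ∑ j ∈ S, Function.update x i a j = ∑ j ∈ S, x j :=
    Finset.sum_congr rfl fun j hj =>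
      Function.update_of_ne (ne_of_mem_of_not_mem hj hi) _ _
  have hlt := hS.2 i a b (fun j => decide (j ∈ S))
    ⟨by simpa using ha, by simpa using (hS.1 i).2.1.trans hb, by simp [updRow, hi], by
      rw [show deg (updRow g i fun j => decide (j ∈ S)) i = S.card from congrArg _ hrow]
      simpa using hbud⟩
    (Or.inr (Or.inr fun h => hne (by
      ext j
      have := congrFun h j
      simp [mem_outNbrs, ← this])))
  simp only [payoff, _root_.cons, spill_eq_sum_outNbrs, hrow, hsum, Function.update_self] at hlt
  by_contra! hle
  exact absurd hlt (not_lt.2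
    (((G.U_mono_x i (y i)).monotone hle).trans ((G.U_mono_y i _).monotone hb)))

/-- Only players providing more than the linking cost receive links. -/
lemma cost_lt_of_link (hS : StrictNash G x y g) {i j : Fin n} (hij : g i j = true) :
    G.k < x j := by
  by_contra! hle
  have hp := G.p_pos i
  have hmem := mem_outNbrs.2 hij
  have hcard := Finset.cast_card_erase_of_mem (R := ℝ) hmem
  have hsum := Finset.add_sum_erase _ x hmem
  have hbud := hS.budget i
  have hdiv : 0 ≤ (G.k - x j) / G.p i := div_nonneg (sub_nonneg.2 hle) hp.le
  have hmul : G.p i * ((G.k - x j) / G.p i) = G.k - x j := mul_div_cancel₀ _ hp.ne'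
  have := hS.cons_lt_of_links_ne (i := i) (S := (outNbrs g i).erase j)
    (a := x i + x j) (b := y i + (G.k - x j) / G.p i)
    (add_nonneg (hS.1 i).1 (hS.1 j).1) (by linarith)
    (fun h => hS.not_mem_outNbrs_self i (Finset.mem_of_mem_erase h))
    (fun h => Finset.notMem_erase j (outNbrs g i) (h.symm ▸ hmem))
    (by rw [hcard, mul_add, hmul]; linarith)
  linarith

/-- Two distinct players who both provide more than the linking cost are linked. -/
lemma link_of_cost_lt (hS : StrictNash G x y g) {i j : Fin n} (hne : i ≠ j)
    (hi : G.k < x i) (hj : G.k < x j) : g i j = true := by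
  by_contra hij
  have hmem : j ∉ outNbrs g i := fun h => hij (mem_outNbrs.1 h)
  have hbud := hS.budget i
  have := hS.cons_lt_of_links_ne (i := i) (S := insert j (outNbrs g i))
    (a := x i - G.k) (b := y i) (by linarith) le_rfl
    (by simp [hne, hS.not_mem_outNbrs_self i])
    (fun h => hmem (h ▸ Finset.mem_insert_self _ _))
    (by rw [Finset.card_insert_of_notMem hmem]; push_cast; linarith)
  rw [Finset.sum_insert hmem] at this
  linarith

/-- A player strictly prefers each of her links to any link she does not establish. -/
lemma lt_of_link_of_not_link (hS : StrictNash G x y g) {i l m : Fin n} (hli : l ≠ i)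
    (hm : g i m = true) (hl : ¬ g i l = true) : x l < x m := by
  have hmem := mem_outNbrs.2 hm
  have hlmem : l ∉ outNbrs g i := fun h => hl (mem_outNbrs.1 h)
  have hlerase : l ∉ (outNbrs g i).erase m := fun h => hlmem (Finset.mem_of_mem_erase h)
  have hsum := Finset.add_sum_erase _ x hmem
  have := hS.cons_lt_of_links_ne (i := i) (S := insert l ((outNbrs g i).erase m))
    (a := x i) (b := y i) (hS.1 i).1 le_rfl
    (by simp [hli.symm, hS.not_mem_outNbrs_self i])
    (fun h => hlmem (h ▸ Finset.mem_insert_self _ _))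
    (by rw [Finset.card_insert_of_notMem hlerase, Finset.card_erase_add_one hmem]
        exact hS.budget i)
  rw [Finset.sum_insert hlerase] at this
  linarith

end StrictNash

/-- If `k ≤ max_i x_i^I` and Assumption 1 holds, the network of any
strict Nash equilibrium is a nested split graph (with core the players contributing
strictly more than `k`). -/
theorem strict_nested_split {n : ℕ} (G : Game n) (hk : 0 < G.k)
    (hN : NormalGame G) (hEC : EngelCompatible G)
    (xI yI : Fin n → ℝ) (hIso : ∀ i, IsoOpt G i (xI i) (yI i))
    (hkle : ∃ i, G.k ≤ xI i)
    (x y : Fin n → ℝ) (g : Net n) (hS : StrictNash G x y g) :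
    IsNestedSplit g (coreOf G x) := by
  have hcore : ∀ {a b}, g a b = true → b ∈ coreOf G x := fun h =>
    mem_coreOf.2 (hS.cost_lt_of_link h)
  refine ⟨⟨fun i hi j hj hne => ?_, fun i _ j hj => ?_, ?_⟩, fun i hi j hj hdeg l hl => ?_⟩
  · rw [mem_coreOf] at hi hj
    exact ⟨hS.link_of_cost_lt hne hi hj, hS.link_of_cost_lt hne.symm hj hi⟩
  · exact Bool.eq_false_iff.2 fun h => hj (hcore h)
  · rintro i hi ⟨j, h | h⟩
    · exact ⟨j, hcore h, h⟩
    · exact absurd (hcore h) hi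
  · by_contra hil
    obtain ⟨m, hm, hjm⟩ : ∃ m ∈ outNbrs g i, m ∉ outNbrs g j := by
      by_contra! hsub
      have heq : outNbrs g i = outNbrs g j := Finset.eq_of_subset_of_card_le hsub hdeg
      exact hil (mem_outNbrs.1 (heq ▸ mem_outNbrs.2 hl))
    rw [mem_outNbrs] at hm hjm
    have hli : l ≠ i := fun h => hi (h ▸ hcore hl)
    have hmj : m ≠ j := fun h => hj (h ▸ hcore hm)
    exact lt_asymm (hS.lt_of_link_of_not_link hli hm hil)
      (hS.lt_of_link_of_not_link hmj hl hjm)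
end
end

section
/- In the local public good game with a common Engel curve γ_i = γ for all players (Assumption 1 holding), consider the configuration (x(g^D), y(g^D), g^D) in which a set D of players forms a complete core (g_{ij} = g_{ji} = 1 for all i,j ∈ D), all other players link only profitably to core members, and all consumption choices are optimal given the network. Suppose x_i(g^D) ≥ k for all i ∈ D, and suppose a periphery player z (linked to all of D) also has x_z(g^D) ≥ k, with w_i ≥ w_z for all i ∈ D. Then in the corresponding configuration g^{D∪{z}} with core D ∪ {z}, every member of D ∪ {z} contributes at least k: x_i(g^{D∪{z}}) ≥ k for all i ∈ D ∪ {z}. -/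
open Finset Function

noncomputable section

theorem deg_eq_card {n : ℕ} {g : Net n} {i : Fin n} {C : Finset (Fin n)}
    (h : ∀ j, g i j = true ↔ j ∈ C) : deg g i = C.card := by
  simp [deg, h]

theorem spill_eq_sum {n : ℕ} (x : Fin n → ℝ) {g : Net n} {i : Fin n} {C : Finset (Fin n)}
    (h : ∀ j, g i j = true ↔ j ∈ C) : spill x g i = ∑ j ∈ C, x j := by
  simp [spill, h]

theorem spill_update_self {n : ℕ} (x : Fin n → ℝ) {g : Net n} {i : Fin n}
    (h : g i i = false) (t : ℝ) : spill (Function.update x i t) g i = spill x g i := by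
  refine Finset.sum_congr rfl fun j _ => ?_
  rcases eq_or_ne j i with rfl | hj
  · simp [h]
  · simp [hj]

/-- Optimal consumption given the network follows the Engel curve. -/
theorem ConsOpt.cons_eq {n : ℕ} {G : Game n} {x y : Fin n → ℝ} {g : Net n}
    (hOpt : ConsOpt G x y g) (hEC : EngelCompatible G) (i : Fin n) :
    cons x g i = max (G.γ i (netInc G x g i)) (spill x g i) := by
  obtain ⟨⟨hx, hy, hg, hb⟩, hmax⟩ := hOpt i
  have hs : 0 ≤ spill x g i := by
    refine Finset.sum_nonneg fun j _ => ?_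
    split_ifs
    exacts [(hOpt j).1.1, le_rfl]
  refine hEC i _ _ _ (y i) hs (by unfold _root_.cons; linarith) hy
    (by unfold _root_.cons netInc; linarith) fun xb yb hxb hyb hm => ?_
  have key := hmax (xb - spill x g i) yb
    ⟨by simpa using hxb, by simpa using hyb, hg, by
      simp only [Function.update_self]; unfold netInc at hm; linarith⟩
  simpa [payoff, _root_.cons, spill_update_self x hg] using key

/-- Engel curves of a normal game are monotone. -/
theorem NormalGame.monotone {n : ℕ} {G : Game n} (hN : NormalGame G) (i : Fin n) :
    Monotone (G.γ i) :=
  monotone_of_deriv_nonneg ((hN i).1.differentiable one_ne_zero) fun t => ((hN i).2 t).1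

/-- If demand strictly increases, income increases by at least as much. -/
theorem NormalGame.sub_le_sub_of_lt {n : ℕ} {G : Game n} (hN : NormalGame G) (i : Fin n)
    {a b : ℝ} (h : G.γ i a < G.γ i b) : G.γ i b - G.γ i a ≤ b - a := by
  have hab : a ≤ b := ((hN.monotone i).reflect_lt h).le
  simpa using Convex.image_sub_le_mul_sub_of_deriv_le (convex_univ (𝕜 := ℝ))
    ((hN i).1.continuous.continuousOn)
    (((hN i).1.differentiable one_ne_zero).differentiableOn)
    (fun t _ => ((hN i).2 t).2) a trivial b trivial hab

/-- In a complete core `C`, the members' total provision solves each member's demand. -/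
theorem ConsOpt.sum_core_eq {n : ℕ} {G : Game n} {x y : Fin n → ℝ} {g : Net n}
    (hOpt : ConsOpt G x y g) (hEC : EngelCompatible G) {C : Finset (Fin n)} {i : Fin n}
    (hi : i ∈ C) (hcore : ∀ j, g i j = true ↔ (j ∈ C ∧ j ≠ i)) :
    ∑ j ∈ C, x j = max (G.γ i (G.w i - ((C.card : ℝ) - 1) * G.k + (∑ j ∈ C, x j - x i)))
      (∑ j ∈ C, x j - x i) := by
  have hmem : ∀ j, g i j = true ↔ j ∈ C.erase i := by
    intro j; rw [hcore, Finset.mem_erase, and_comm]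
  have hspill : spill x g i = ∑ j ∈ C, x j - x i := by
    rw [spill_eq_sum x hmem, Finset.sum_erase_eq_sub hi]
  have hdeg : (deg g i : ℝ) = (C.card : ℝ) - 1 := by
    rw [deg_eq_card hmem, Finset.cast_card_erase_of_mem hi]
  have h := hOpt.cons_eq hEC i
  rw [_root_.cons, netInc, hspill, hdeg] at h
  linarith

/-- with a common Engel curve, if in the configuration with complete core
`D` every core member and a periphery player `z` (linked to all of `D`, poorer than all
of `D`) contribute at least `k`, then in the corresponding configuration with core
`D ∪ {z}` every core member contributes at least `k`. -/
theorem in_the_core {n : ℕ} (G : Game n) (hk : 0 < G.k)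
    (hN : NormalGame G) (hEC : EngelCompatible G)
    (γ0 : ℝ → ℝ) (hγ : ∀ i, G.γ i = γ0)
    (D : Finset (Fin n)) (z : Fin n) (hz : z ∉ D)
    (x y : Fin n → ℝ) (g : Net n) (hOpt : ConsOpt G x y g)
    (hcore : ∀ i ∈ D, ∀ j, g i j = true ↔ (j ∈ D ∧ j ≠ i))
    (hper : ∀ i ∉ D, ∀ j ∉ D, g i j = false)
    (hzD : ∀ i ∈ D, g z i = true)
    (hxD : ∀ i ∈ D, G.k ≤ x i) (hxz : G.k ≤ x z)
    (hwz : ∀ i ∈ D, G.w z ≤ G.w i)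
    (x' y' : Fin n → ℝ) (g' : Net n) (hOpt' : ConsOpt G x' y' g')
    (hcore' : ∀ i ∈ insert z D, ∀ j, g' i j = true ↔ (j ∈ insert z D ∧ j ≠ i))
    (hper' : ∀ i ∉ insert z D, ∀ j ∉ insert z D, g' i j = false) :
    ∀ i ∈ insert z D, G.k ≤ x' i := by
  have hmono : Monotone γ0 := hγ z ▸ hN.monotone z
  have hslope : ∀ {a b : ℝ}, γ0 a < γ0 b → γ0 b - γ0 a ≤ b - a :=
    hγ z ▸ fun h => hN.sub_le_sub_of_lt z h
  set S := ∑ j ∈ D, x j with hS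
  set S' := ∑ j ∈ insert z D, x' j with hS'
  have hS'z : S' = x' z + ∑ j ∈ D, x' j := Finset.sum_insert hz
  have hcard : ((insert z D).card : ℝ) = D.card + 1 := by
    rw [Finset.card_insert_of_notMem hz]; push_cast; rfl
  have hD : ∀ i ∈ D, γ0 (G.w i - ((D.card : ℝ) - 1) * G.k + (S - x i)) = S := by
    intro i hi
    have h := hOpt.sum_core_eq hEC hi (hcore i hi)
    rw [hγ, ← hS] at h
    rcases max_choice (γ0 (G.w i - ((D.card : ℝ) - 1) * G.k + (S - x i))) (S - x i) with h1 | h1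
    · linarith
    · linarith [hxD i hi]
  have hzmem : ∀ j, g z j = true ↔ j ∈ D := fun j =>
    ⟨fun h => by_contra fun hj => by simp [hper z hz j hj] at h, hzD j⟩
  have hT : γ0 (G.w z - D.card * G.k + S) = x z + S := by
    have h := hOpt.cons_eq hEC z
    rw [_root_.cons, netInc, spill_eq_sum x hzmem, deg_eq_card hzmem, hγ, ← hS] at h
    rcases max_choice (γ0 (G.w z - D.card * G.k + S)) S with h1 | h1
    · linarith
    · linarith
  have hnew : ∀ i ∈ insert z D,
      S' = max (γ0 (G.w i - D.card * G.k + (S' - x' i))) (S' - x' i) := by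
    intro i hi
    have h := hOpt'.sum_core_eq hEC hi (hcore' i hi)
    rwa [hγ, ← hS', hcard, add_sub_cancel_right] at h
  have hw : ∀ i ∈ insert z D, G.w z ≤ G.w i := by
    intro i hi
    rcases Finset.mem_insert.1 hi with rfl | hi
    exacts [le_rfl, hwz i hi]
  rcases lt_or_ge S' (x z + S) with hlt | hge
  · intro i hi
    have h1 : γ0 (G.w z - D.card * G.k + (S' - x' i)) ≤ S' :=
      (hmono (by linarith [hw i hi])).trans ((le_max_left _ _).trans_eq (hnew i hi).symm)
    have h2 := hslope (h1.trans_lt (hlt.trans_eq hT.symm))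
    linarith
  · -- a member of the larger core gives at most `x j - k` whenever `j ∈ D` is at least as rich
    have hle : ∀ i ∈ insert z D, ∀ j ∈ D, G.w i ≤ G.w j → x' i ≤ x j - G.k := by
      intro i hi j hj hij
      rcases (hOpt' i).1.1.eq_or_lt with h0 | hpos
      · linarith [hxD j hj]
      · have h1 : γ0 (G.w i - D.card * G.k + (S' - x' i)) = S' := by
          have h := hnew i hi
          rcases max_choice (γ0 (G.w i - D.card * G.k + (S' - x' i))) (S' - x' i) with h2 | h2
          · linarith
          · linarith
        have h2 := hslope (a := G.w j - ((D.card : ℝ) - 1) * G.k + (S - x j))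
          (b := G.w i - D.card * G.k + (S' - x' i)) (by rw [hD j hj, h1]; linarith)
        rw [hD j hj, h1] at h2
        linarith
    have hself : ∀ j ∈ D, x' j ≤ x j - G.k := fun j hj =>
      hle j (Finset.mem_insert_of_mem hj) j hj le_rfl
    intro i hi
    rcases Finset.mem_insert.1 hi with rfl | hiD
    · have h1 : ∑ j ∈ D, x' j ≤ S := Finset.sum_le_sum fun j hj => by linarith [hself j hj]
      linarith
    · have h1 : ∑ j ∈ D.erase i, x' j ≤ ∑ j ∈ D.erase i, x j :=
        Finset.sum_le_sum fun j hj => by linarith [hself j (Finset.mem_of_mem_erase hj)]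
      rw [Finset.sum_erase_eq_sub hiD, Finset.sum_erase_eq_sub hiD] at h1
      linarith [hle z (Finset.mem_insert_self z D) i hiD (hwz i hiD)]
end
end
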